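/- Every instance (N,V) of 3D-SR-SAS-BIN contains a stable P-matching, and hence a stable matching. Moreover, if |N| is a multiple of three, then (N,V) contains a stable matching in which every agent is matched. -/

import Mathlib

open Finset

variable {A : Type*}

/-- `M` is a matching on agent set `N`: a set of pairwise disjoint triples of agents of `N`. -/
def IsMatching [DecidableEq A] (N : Finset A) (M : Finset (Finset A)) : Prop :=
  (∀ t ∈ M, t.card = 3 ∧ t ⊆ N) ∧ ∀ t ∈ M, ∀ s ∈ M, t ≠ s → Disjoint t s

/-- The (additively separable) utility of agent `a` in matching `M` under valuations `val`:
the sum, over the triples of `M` containing `a`, of the valuations by `a` of the other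
members; this is `0` if `a` is unmatched, and for a genuine matching it is the sum of the
valuations of `a`'s two partners. -/
def utility [DecidableEq A] (val : A → A → ℤ) (M : Finset (Finset A)) (a : A) : ℤ :=
  ∑ t ∈ M.filter (fun t => a ∈ t), ∑ b ∈ t.erase a, val a b

/-- The triple consisting of the three distinct agents `x, y, z` of `N` blocks `M`. -/
def Blocks [DecidableEq A] (N : Finset A) (val : A → A → ℤ) (M : Finset (Finset A))
    (x y z : A) : Prop :=
  x ∈ N ∧ y ∈ N ∧ z ∈ N ∧ x ≠ y ∧ x ≠ z ∧ y ≠ z ∧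
  utility val M x < val x y + val x z ∧
  utility val M y < val y x + val y z ∧
  utility val M z < val z x + val z y

/-- `M` is stable: no triple of agents of `N` blocks it. -/
def IsStable [DecidableEq A] (N : Finset A) (val : A → A → ℤ) (M : Finset (Finset A)) : Prop :=
  ∀ x y z : A, ¬ Blocks N val M x y z

/-- Binary symmetric preferences on `N`. -/
def BinSym [DecidableEq A] (N : Finset A) (val : A → A → ℤ) : Prop :=
  (∀ a ∈ N, ∀ b ∈ N, a ≠ b → val a b = 0 ∨ val a b = 1) ∧
  (∀ a ∈ N, ∀ b ∈ N, val a b = val b a)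

/-- A `P`-matching: a matching in which every matched agent has strictly positive utility. -/
def IsPMatching [DecidableEq A] (N : Finset A) (val : A → A → ℤ)
    (M : Finset (Finset A)) : Prop :=
  IsMatching N M ∧ ∀ a : A, (∃ t ∈ M, a ∈ t) → 0 < utility val M a

/-- `x, y, z` form a triangle: three distinct agents of `N` whose pairwise valuations
all equal `1`. -/
def IsTriangle [DecidableEq A] (N : Finset A) (val : A → A → ℤ) (x y z : A) : Prop :=
  x ∈ N ∧ y ∈ N ∧ z ∈ N ∧ x ≠ y ∧ x ≠ z ∧ y ≠ z ∧
  val x y = 1 ∧ val y z = 1 ∧ val x z = 1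

/-- The instance contains no triangle. -/
def TriangleFree [DecidableEq A] (N : Finset A) (val : A → A → ℤ) : Prop :=
  ∀ x y z : A, ¬ IsTriangle N val x y z

/-!
A triangle of mutual friends can be split off and used as a triple: its members attain the largest
possible utility `2`, hence never take part in a blocking triple.

In a triangle-free instance a `P`-matching consists of cherries, i.e. paths with three agents, and
it is stable if and only if every cherry with unmatched ends has a centre of utility `2`. Agents are
added one at a time. After adding `h`, either `h` is the centre of a blocking cherry, and matching
that cherry restores stability, or all blocking cherries end at `h`. Let `h - y - z` be one of
them. If `y` is unmatched, match this cherry. Otherwise `y` is an end of a triple `{y, c, w}` with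
centre `c`. If `c` has an unmatched friend `d ≠ h`, replace the triple by the cherries `h - y - z`
and `w - c - d`; if not, replace it by `c - y - h`. In the latter case all blocking cherries now end
at `w`, the set `U` of the other unmatched agents is unchanged, and the set of agents of utility `2`
with a friend in `U` has gained `y`, so that the process terminates.

Since utilities are nonnegative, adding triples of unmatched agents preserves stability.
-/

section Matching

variable {N N' : Finset A} {val : A → A → ℤ} {M M' : Finset (Finset A)} {t : Finset A}
  {x y z a : A}

/-- The agents that lie in no triple of `M`; agents outside the instance are included. -/
def unmatched (M : Finset (Finset A)) : Set A := {a | ∀ t ∈ M, a ∉ t}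

lemma notMem_unmatched (ht : t ∈ M) (ha : a ∈ t) : a ∉ unmatched M :=
  fun h => h t ht ha

variable [DecidableEq A]

lemma ne_of_mem_unmatched (ht : {x, y, z} ∈ M) (ha : a ∈ unmatched M) :
    a ≠ x ∧ a ≠ y ∧ a ≠ z := by
  simpa using fun hat => notMem_unmatched ht hat ha

lemma unmatched_insert (t : Finset A) (M : Finset (Finset A)) :
    unmatched (insert t M) = unmatched M \ t := by
  ext a
  simp [unmatched, and_comm]

lemma IsMatching.unmatched_erase (hM : IsMatching N M) (ht : t ∈ M) :
    unmatched (M.erase t) = unmatched M ∪ t := by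
  ext a
  refine ⟨fun h => ?_, ?_⟩
  · by_cases hat : a ∈ t
    · exact .inr hat
    · refine .inl fun s hs has => h s (mem_erase.2 ⟨?_, hs⟩) has
      rintro rfl
      exact hat has
  · rintro (h | h) s hs has
    · exact h s (mem_of_mem_erase hs) has
    · exact disjoint_left.1 (hM.2 s (mem_of_mem_erase hs) t ht (ne_of_mem_erase hs)) has h

lemma IsMatching.mono (hM : IsMatching N M) (hN : N ⊆ N') : IsMatching N' M :=
  ⟨fun t ht => ⟨(hM.1 t ht).1, (hM.1 t ht).2.trans hN⟩, hM.2⟩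

lemma IsMatching.subset (hM : IsMatching N M) (h : M' ⊆ M) : IsMatching N M' :=
  ⟨fun t ht => hM.1 t (h ht), fun t ht s hs => hM.2 t (h ht) s (h hs)⟩

lemma IsMatching.mem_unmatched (hM : IsMatching N M) (ha : a ∉ N) : a ∈ unmatched M :=
  fun t ht hat => ha ((hM.1 t ht).2 hat)

lemma IsMatching.union (hM : IsMatching N M) (hM' : IsMatching N M')
    (h : ∀ t ∈ M', ↑t ⊆ unmatched M) : IsMatching N (M ∪ M') := by
  have hdisj : ∀ t ∈ M, ∀ s ∈ M', Disjoint t s := fun t ht s hs =>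
    disjoint_left.2 fun a hat has => h s hs has t ht hat
  refine ⟨fun t ht => (mem_union.1 ht).elim (hM.1 t) (hM'.1 t), fun t ht s hs hne => ?_⟩
  rcases mem_union.1 ht with ht | ht <;> rcases mem_union.1 hs with hs | hs
  · exact hM.2 t ht s hs hne
  · exact hdisj t ht s hs
  · exact (hdisj s hs t ht).symm
  · exact hM'.2 t ht s hs hne

lemma isMatching_singleton (ht : t.card = 3) (htN : t ⊆ N) : IsMatching N {t} := by
  refine ⟨fun s hs => ?_, fun s hs r hr hne => ?_⟩
  · rw [mem_singleton.1 hs]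
    exact ⟨ht, htN⟩
  · exact absurd ((mem_singleton.1 hs).trans (mem_singleton.1 hr).symm) hne

lemma IsMatching.insert (hM : IsMatching N M) (ht : t.card = 3) (htN : t ⊆ N)
    (h : ↑t ⊆ unmatched M) : IsMatching N (insert t M) := by
  rw [insert_eq, union_comm]
  exact hM.union (isMatching_singleton ht htN) fun s hs => mem_singleton.1 hs ▸ h

lemma utility_of_mem_unmatched (ha : a ∈ unmatched M) : utility val M a = 0 := by
  rw [utility, filter_eq_empty_iff.2 fun t ht => ha t ht, sum_empty]

lemma IsMatching.utility_eq_sum (hM : IsMatching N M) (ht : t ∈ M) (ha : a ∈ t) :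
    utility val M a = ∑ b ∈ t.erase a, val a b := by
  have htriples : M.filter (a ∈ ·) = {t} := by
    refine eq_singleton_iff_unique_mem.2 ⟨mem_filter.2 ⟨ht, ha⟩, fun s hs => ?_⟩
    obtain ⟨hs, has⟩ := mem_filter.1 hs
    by_contra hne
    exact disjoint_left.1 (hM.2 s hs t ht hne) has ha
  rw [utility, htriples, sum_singleton]

lemma IsMatching.utility_eq_add (hM : IsMatching N M) (ht : {x, y, z} ∈ M) (hxy : x ≠ y)
    (hxz : x ≠ z) (hyz : y ≠ z) : utility val M x = val x y + val x z := by
  rw [hM.utility_eq_sum ht (mem_insert_self _ _), erase_insert (by simp [hxy, hxz]),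
    sum_pair hyz]

lemma IsMatching.utility_le (hM' : IsMatching N M')
    (hval : ∀ a ∈ N, ∀ b ∈ N, a ≠ b → 0 ≤ val a b) (h : ∀ t ∈ M, a ∈ t → t ∈ M') :
    utility val M a ≤ utility val M' a := by
  refine sum_le_sum_of_subset_of_nonneg ?_ fun t ht _ => sum_nonneg fun b hb => ?_
  · intro t ht
    obtain ⟨ht, hat⟩ := mem_filter.1 ht
    exact mem_filter.2 ⟨h t ht hat, hat⟩
  · obtain ⟨ht, hat⟩ := mem_filter.1 ht
    have htN := (hM'.1 t ht).2
    exact hval a (htN hat) b (htN (mem_of_mem_erase hb)) (ne_of_mem_erase hb).symm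

lemma IsStable.of_utility_le (hst : IsStable N' val M)
    (h : ∀ a ∈ N, ∀ b ∈ N, ∀ c ∈ N, a ≠ b → a ≠ c → utility val M' a < val a b + val a c →
      a ∈ N' ∧ utility val M a ≤ utility val M' a) : IsStable N val M' := by
  rintro x y z ⟨hx, hy, hz, hxy, hxz, hyz, ux, uy, uz⟩
  obtain ⟨hx', lex⟩ := h x hx y hy z hz hxy hxz ux
  obtain ⟨hy', ley⟩ := h y hy x hx z hz hxy.symm hyz uy
  obtain ⟨hz', lez⟩ := h z hz x hx y hy hxz.symm hyz.symm uz
  exact hst x y z ⟨hx', hy', hz', hxy, hxz, hyz, lex.trans_lt ux, ley.trans_lt uy,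
    lez.trans_lt uz⟩

lemma Blocks.rotate (h : Blocks N val M x y z) : Blocks N val M y z x := by
  obtain ⟨hx, hy, hz, hxy, hxz, hyz, ux, uy, uz⟩ := h
  exact ⟨hy, hz, hx, hyz, hxy.symm, hxz.symm, add_comm (val y x) _ ▸ uy,
    add_comm (val z x) _ ▸ uz, ux⟩

lemma IsPMatching.mono (hM : IsPMatching N val M) (hN : N ⊆ N') : IsPMatching N' val M :=
  ⟨hM.1.mono hN, hM.2⟩

lemma IsPMatching.subset (hM : IsPMatching N val M) (h : M' ⊆ M) : IsPMatching N val M' := by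
  refine ⟨hM.1.subset h, fun a ⟨t, ht, hat⟩ => ?_⟩
  rw [(hM.1.subset h).utility_eq_sum ht hat, ← hM.1.utility_eq_sum (h ht) hat]
  exact hM.2 a ⟨t, h ht, hat⟩

lemma IsPMatching.utility_pos (hM : IsPMatching N val M) (ha : a ∉ unmatched M) :
    0 < utility val M a := by
  simp only [unmatched, Set.mem_ofPred_eq, not_forall, not_not] at ha
  obtain ⟨t, ht, hat⟩ := ha
  exact hM.2 a ⟨t, ht, hat⟩

lemma IsPMatching.utility_nonneg (hM : IsPMatching N val M) (a : A) : 0 ≤ utility val M a := by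
  by_cases ha : a ∈ unmatched M
  · exact (utility_of_mem_unmatched ha).ge
  · exact (hM.utility_pos ha).le

lemma IsPMatching.mem_unmatched (hM : IsPMatching N val M) (ha : utility val M a ≤ 0) :
    a ∈ unmatched M := by
  by_contra h
  exact (hM.utility_pos h).not_ge ha

end Matching

section Perfect

variable [DecidableEq A] {N : Finset A} {val : A → A → ℤ} {M : Finset (Finset A)}

lemma exists_finpartition_forall_card_eq {s : Finset A} {m : ℕ} (h : m ∣ s.card) :
    ∃ P : Finpartition s, ∀ t ∈ P.parts, t.card = m := by
  obtain ⟨a, ha⟩ := h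
  have hcard : a * m + 0 * (m + 1) = s.card := by lia
  let P := (⊥ : Finpartition s).equitabilise hcard
  refine ⟨P, fun t ht => (Finpartition.card_eq_of_mem_parts_equitabilise ht).resolve_right ?_⟩
  have hbig := (⊥ : Finpartition s).card_filter_equitabilise_big hcard
  exact filter_eq_empty_iff.1 (card_eq_zero.1 hbig) ht

lemma IsMatching.card_biUnion (hM : IsMatching N M) : (M.biUnion id).card = M.card * 3 := by
  refine (Finset.card_biUnion (t := id) fun t ht s hs => hM.2 t ht s hs).trans ?_
  exact sum_const_nat fun t ht => (hM.1 t ht).1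

lemma IsMatching.exists_superset_perfect (hM : IsMatching N M) (h3 : 3 ∣ N.card) :
    ∃ M', M ⊆ M' ∧ IsMatching N M' ∧ ∀ a ∈ N, ∃ t ∈ M', a ∈ t := by
  have hsub : M.biUnion id ⊆ N := biUnion_subset.2 fun t ht => (hM.1 t ht).2
  have hrest : 3 ∣ (N \ M.biUnion id).card := by
    rw [card_sdiff_of_subset hsub, hM.card_biUnion]
    exact Nat.dvd_sub h3 (dvd_mul_left 3 _)
  obtain ⟨P, hP⟩ := exists_finpartition_forall_card_eq hrest
  have hPM : IsMatching N P.parts :=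
    ⟨fun t ht => ⟨hP t ht, (P.le ht).trans sdiff_subset⟩, fun t ht s hs => P.disjoint ht hs⟩
  refine ⟨M ∪ P.parts, subset_union_left, hM.union hPM fun t ht a hat s hs has => ?_,
    fun a ha => ?_⟩
  · exact (mem_sdiff.1 (P.le ht hat)).2 (mem_biUnion.2 ⟨s, hs, has⟩)
  · by_cases haM : a ∈ M.biUnion id
    · obtain ⟨t, ht, hat⟩ := mem_biUnion.1 haM
      exact ⟨t, mem_union_left _ ht, hat⟩
    · obtain ⟨t, ht, hat⟩ := P.exists_mem (mem_sdiff.2 ⟨ha, haM⟩)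
      exact ⟨t, mem_union_right _ ht, hat⟩

lemma IsStable.exists_perfect (hM : IsMatching N M) (hst : IsStable N val M)
    (hval : ∀ a ∈ N, ∀ b ∈ N, a ≠ b → 0 ≤ val a b) (h3 : 3 ∣ N.card) :
    ∃ M', IsMatching N M' ∧ IsStable N val M' ∧ ∀ a ∈ N, ∃ t ∈ M', a ∈ t := by
  obtain ⟨M', hMM', hM', hperfect⟩ := hM.exists_superset_perfect h3
  exact ⟨M', hM', hst.of_utility_le fun a ha _ _ _ _ _ _ _ =>
    ⟨ha, hM'.utility_le hval fun t ht _ => hMM' ht⟩, hperfect⟩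

end Perfect

section Cherry

variable {N N' : Finset A} {val : A → A → ℤ} {M M' : Finset (Finset A)} {x c z : A}

/-- The friendship graph of an instance: two distinct agents of `N` are adjacent when each values
the other at `1`. -/
def friendGraph (N : Finset A) (val : A → A → ℤ) : SimpleGraph A where
  Adj a b := a ≠ b ∧ a ∈ N ∧ b ∈ N ∧ val a b = 1 ∧ val b a = 1
  symm := ⟨fun _ _ ⟨hne, ha, hb, hab, hba⟩ => ⟨hne.symm, hb, ha, hba, hab⟩⟩
  loopless := ⟨fun _ h => h.1 rfl⟩

/-- The path `x - c - z` in the friendship graph, written with its centre in the middle; `x` and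
`z` may be adjacent. -/
structure IsCherry (N : Finset A) (val : A → A → ℤ) (x c z : A) : Prop where
  left : (friendGraph N val).Adj c x
  right : (friendGraph N val).Adj c z
  ne : x ≠ z

lemma IsCherry.symm (h : IsCherry N val x c z) : IsCherry N val z c x :=
  ⟨h.right, h.left, h.ne.symm⟩

lemma IsCherry.restrict (h : IsCherry N' val x c z) (hx : x ∈ N) (hc : c ∈ N) (hz : z ∈ N) :
    IsCherry N val x c z :=
  ⟨⟨h.left.1, hc, hx, h.left.2.2.2⟩, ⟨h.right.1, hc, hz, h.right.2.2.2⟩, h.ne⟩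

variable [DecidableEq A]

lemma IsCherry.card_triple (h : IsCherry N val x c z) : ({x, c, z} : Finset A).card = 3 :=
  card_eq_three.2 ⟨x, c, z, h.left.ne.symm, h.ne, h.right.ne, rfl⟩

lemma IsCherry.subset (h : IsCherry N val x c z) : {x, c, z} ⊆ N := by
  simp [insert_subset_iff, h.left.2.1, h.left.2.2.1, h.right.2.2.1]

lemma IsCherry.utility_centre (h : IsCherry N val x c z) (hM : IsMatching N M)
    (ht : {x, c, z} ∈ M) : utility val M c = 2 := by
  rw [hM.utility_eq_add (insert_comm c x {z} ▸ ht) h.left.ne h.right.ne h.ne,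
    h.left.2.2.2.1, h.right.2.2.2.1]
  rfl

lemma IsCherry.utility_left (h : IsCherry N val x c z) (hM : IsMatching N M)
    (ht : {x, c, z} ∈ M) : utility val M x = 1 + val x z := by
  rw [hM.utility_eq_add ht h.left.ne.symm h.ne h.right.ne, h.left.2.2.2.2]

lemma IsCherry.utility_right (h : IsCherry N val x c z) (hM : IsMatching N M)
    (ht : {x, c, z} ∈ M) : utility val M z = 1 + val z x := by
  have hrev : ({z, c, x} : Finset A) = {x, c, z} := by
    rw [insert_comm, pair_comm, insert_comm]
  exact h.symm.utility_left hM (hrev ▸ ht)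

lemma BinSym.mono (h : BinSym N val) (hN : N' ⊆ N) : BinSym N' val :=
  ⟨fun a ha b hb => h.1 a (hN ha) b (hN hb), fun a ha b hb => h.2 a (hN ha) b (hN hb)⟩

lemma BinSym.nonneg (hbs : BinSym N val) : ∀ a ∈ N, ∀ b ∈ N, a ≠ b → 0 ≤ val a b := by
  intro a ha b hb hab
  rcases hbs.1 a ha b hb hab with h | h <;> lia

lemma BinSym.le_one (hbs : BinSym N val) : ∀ a ∈ N, ∀ b ∈ N, a ≠ b → val a b ≤ 1 := by
  intro a ha b hb hab
  rcases hbs.1 a ha b hb hab with h | h <;> lia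

lemma BinSym.adj (hbs : BinSym N val) {a b : A} (ha : a ∈ N) (hb : b ∈ N) (hab : a ≠ b)
    (hval : val a b = 1) : (friendGraph N val).Adj a b :=
  ⟨hab, ha, hb, hval, hbs.2 a ha b hb ▸ hval⟩

lemma IsPMatching.insert_cherry (hval : ∀ a ∈ N, ∀ b ∈ N, a ≠ b → 0 ≤ val a b)
    (hM : IsPMatching N val M) (h : IsCherry N val x c z) (hx : x ∈ unmatched M)
    (hc : c ∈ unmatched M) (hz : z ∈ unmatched M) : IsPMatching N val (insert {x, c, z} M) := by
  have hM' : IsMatching N (insert {x, c, z} M) :=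
    hM.1.insert h.card_triple h.subset (by simp [Set.insert_subset_iff, hx, hc, hz])
  have htM' := mem_insert_self {x, c, z} M
  have hxN := h.left.2.2.1
  have hzN := h.right.2.2.1
  refine ⟨hM', fun a ⟨t, ht, hat⟩ => ?_⟩
  rcases mem_insert.1 ht with rfl | ht
  · obtain rfl | rfl | rfl : a = x ∨ a = c ∨ a = z := by simpa using hat
    · rw [h.utility_left hM' htM']
      linarith [hval a hxN z hzN h.ne]
    · rw [h.utility_centre hM' htM']
      exact two_pos
    · rw [h.utility_right hM' htM']
      linarith [hval a hzN x hxN h.ne.symm]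
  · exact (hM.2 a ⟨t, ht, hat⟩).trans_le
      (hM'.utility_le hval fun s hs _ => mem_insert_of_mem hs)

lemma IsPMatching.exchange_cherry (hval : ∀ a ∈ N, ∀ b ∈ N, a ≠ b → 0 ≤ val a b)
    (hM : IsPMatching N val M) {t : Finset A} (ht : t ∈ M) (h : IsCherry N val x c z)
    (hx : x ∈ unmatched M ∪ t) (hc : c ∈ unmatched M ∪ t) (hz : z ∈ unmatched M ∪ t) :
    IsPMatching N val (insert {x, c, z} (M.erase t)) := by
  rw [← hM.1.unmatched_erase ht] at hx hc hz
  exact (hM.subset (M.erase_subset t)).insert_cherry hval h hx hc hz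

lemma IsMatching.exists_eq_triple (hM : IsMatching N M) {t : Finset A} (ht : t ∈ M) {y : A}
    (hy : y ∈ t) : ∃ p q, y ≠ p ∧ y ≠ q ∧ p ≠ q ∧ t = {y, p, q} := by
  have hcard : (t.erase y).card = 2 := by rw [card_erase_of_mem hy, (hM.1 t ht).1]
  obtain ⟨p, q, hpq, hpair⟩ := card_eq_two.1 hcard
  have hyp : p ≠ y := ne_of_mem_erase (hpair ▸ mem_insert_self p {q})
  have hyq : q ≠ y := ne_of_mem_erase (hpair ▸ mem_insert_of_mem (mem_singleton_self q))
  exact ⟨p, q, hyp.symm, hyq.symm, hpq, by rw [← hpair, insert_erase hy]⟩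

lemma IsPMatching.exists_cherry (hbs : BinSym N val) (hM : IsPMatching N val M) {y : A}
    (hy : y ∉ unmatched M) (hlt : utility val M y < 2) :
    ∃ c w, IsCherry N val y c w ∧ {y, c, w} ∈ M ∧ utility val M w < 2 := by
  have hpos := hM.utility_pos hy
  simp only [unmatched, Set.mem_ofPred_eq, not_forall, not_not] at hy
  obtain ⟨t, ht, hyt⟩ := hy
  obtain ⟨p, q, hyp, hyq, hpq, rfl⟩ := hM.1.exists_eq_triple ht hyt
  have hN := (hM.1.1 _ ht).2
  have hyN : y ∈ N := hN (by simp)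
  have hpN : p ∈ N := hN (by simp)
  have hqN : q ∈ N := hN (by simp)
  have uy := hM.1.utility_eq_add (val := val) ht hyp hyq hpq
  wlog hvyp : val y p = 1 generalizing p q
  · have hvyp0 := (hbs.1 y hyN p hpN hyp).resolve_right hvyp
    have hvyq := (hbs.1 y hyN q hqN hyq).resolve_left (by lia)
    rw [pair_comm] at ht hyt hN
    exact this q p hyq hyp hpq.symm ht hyt hN hqN hpN (by lia) hvyq
  have hvqy : val q y = 0 := by
    rw [hbs.2 q hqN y hyN]
    exact (hbs.1 y hyN q hqN hyq).resolve_right (by lia)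
  have hvqp : val q p = 1 := by
    have hrot : ({q, y, p} : Finset A) = {y, p, q} := by rw [insert_comm, pair_comm]
    have uq := hM.1.utility_eq_add (val := val) (hrot ▸ ht) hyq.symm hpq.symm hyp
    have uq_pos := hM.2 q ⟨_, ht, by simp⟩
    exact (hbs.1 q hqN p hpN hpq.symm).resolve_left (by lia)
  have hcherry : IsCherry N val y p q :=
    ⟨(hbs.adj hyN hpN hyp hvyp).symm, (hbs.adj hqN hpN hpq.symm hvqp).symm, hyq⟩
  refine ⟨p, q, hcherry, ht, ?_⟩
  rw [hcherry.utility_right hM.1 ht, hvqy]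
  exact one_lt_two

end Cherry

section Saturation

variable {N : Finset A} {val : A → A → ℤ} {M M' : Finset (Finset A)} {U U' : Set A}
  {h x y z c w : A}

lemma TriangleFree.mono [DecidableEq A] {N' : Finset A} (htf : TriangleFree N val)
    (hN : N' ⊆ N) : TriangleFree N' val :=
  fun x y z ⟨hx, hy, hz, ht⟩ => htf x y z ⟨hN hx, hN hy, hN hz, ht⟩

lemma TriangleFree.not_adj [DecidableEq A] (htf : TriangleFree N val)
    (hxy : (friendGraph N val).Adj x y) (hxz : (friendGraph N val).Adj x z) :
    ¬ (friendGraph N val).Adj y z :=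
  fun hyz => htf x y z ⟨hxy.2.1, hyz.2.1, hyz.2.2.1, hxy.ne, hxz.ne, hyz.ne, hxy.2.2.2.1,
    hyz.2.2.2.1, hxz.2.2.2.1⟩

variable [DecidableEq A]

/-- Every cherry with both ends in `U` has a centre that attains the largest possible utility `2`.
For `U = unmatched M`, this says that no cherry blocks `M`. -/
def Saturates (N : Finset A) (val : A → A → ℤ) (M : Finset (Finset A)) (U : Set A) : Prop :=
  ∀ ⦃x c z⦄, IsCherry N val x c z → x ∈ U → z ∈ U → 2 ≤ utility val M c

lemma Saturates.mono (hsat : Saturates N val M U) (hU : U' ⊆ U)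
    (hle : ∀ c, ∀ z ∈ U, (friendGraph N val).Adj c z → 2 ≤ utility val M c →
      2 ≤ utility val M' c) : Saturates N val M' U' :=
  fun _ c z hc hx hz => hle c z (hU hz) hc.right (hsat hc (hU hx) (hU hz))

lemma Saturates.exists_cherry_of_not_insert (hsat : Saturates N val M U)
    (hnot : ¬ Saturates N val M (insert h U)) :
    ∃ y, ∃ z ∈ U, IsCherry N val h y z ∧ utility val M y < 2 := by
  simp only [Saturates, not_forall, not_le] at hnot
  obtain ⟨x, c, z, hc, hx, hz, hlt⟩ := hnot
  rcases hx with rfl | hx <;> rcases hz with rfl | hz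
  · exact absurd rfl hc.ne
  · exact ⟨c, z, hz, hc, hlt⟩
  · exact ⟨c, x, hx, hc.symm, hlt⟩
  · exact absurd (hsat hc hx hz) hlt.not_ge

lemma IsStable.saturates (hbs : BinSym N val) (hst : IsStable N val M) :
    Saturates N val M (unmatched M) := by
  intro x c z hc hx hz
  by_contra! hlt
  have hxN := hc.left.2.2.1
  have hzN := hc.right.2.2.1
  have vxz := hbs.nonneg x hxN z hzN hc.ne
  have vzx := hbs.nonneg z hzN x hxN hc.ne.symm
  obtain ⟨hcx, hcN, -, vcx, vxc⟩ := hc.left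
  obtain ⟨hcz, -, -, vcz, vzc⟩ := hc.right
  refine hst x c z ⟨hxN, hcN, hzN, hcx.symm, hc.ne, hcz, ?_, ?_, ?_⟩
  · rw [utility_of_mem_unmatched hx]
    lia
  · lia
  · rw [utility_of_mem_unmatched hz]
    lia

lemma IsPMatching.isStable_of_saturates (hbs : BinSym N val) (htf : TriangleFree N val)
    (hM : IsPMatching N val M) (hsat : Saturates N val M (unmatched M)) :
    IsStable N val M := by
  have no_blocking_centre : ∀ x y z, Blocks N val M x y z → val x y = 1 → val x z ≠ 1 := by
    rintro x y z ⟨hx, hy, hz, hxy, hxz, hyz, ux, uy, uz⟩ vxy vxz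
    have hc : IsCherry N val y x z := ⟨hbs.adj hx hy hxy vxy, hbs.adj hx hz hxz vxz, hyz⟩
    have vyz : val y z = 0 := (hbs.1 y hy z hz hyz).resolve_right fun vyz =>
      htf.not_adj hc.left hc.right (hbs.adj hy hz hyz vyz)
    have vyx := hc.left.2.2.2.2
    have vzx := hc.right.2.2.2.2
    have vzy := hbs.2 z hz y hy
    have hyU : y ∈ unmatched M := hM.mem_unmatched (by lia)
    have hzU : z ∈ unmatched M := hM.mem_unmatched (by lia)
    linarith [hsat hc hyU hzU]
  have exists_friend : ∀ x y z, Blocks N val M x y z → val x y = 1 ∨ val x z = 1 := by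
    rintro x y z ⟨hx, hy, hz, hxy, hxz, -, ux, -, -⟩
    have ux_nonneg := hM.utility_nonneg x
    refine (hbs.1 x hx y hy hxy).symm.imp_right fun vxy => ?_
    exact (hbs.1 x hx z hz hxz).resolve_left (by lia)
  intro x y z hblocks
  have hx_centre := no_blocking_centre x y z hblocks
  have hy_centre := no_blocking_centre y z x hblocks.rotate
  have hz_centre := no_blocking_centre z x y hblocks.rotate.rotate
  have hx_friend := exists_friend x y z hblocks
  have hy_friend := exists_friend y z x hblocks.rotate
  have hz_friend := exists_friend z x y hblocks.rotate.rotate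
  obtain ⟨hx, hy, hz, -⟩ := hblocks
  rw [hbs.2 y hy x hx] at hy_centre hy_friend
  rw [hbs.2 z hz x hx, hbs.2 z hz y hy] at hz_centre hz_friend
  tauto

end Saturation

section Repair

variable [DecidableEq A] {N : Finset A} {val : A → A → ℤ} {M : Finset (Finset A)} {U : Set A}
  {h y z c w d : A}

/-- A `P`-matching for which every blocking cherry ends at the single unmatched agent `h`; the set
`U` collects the other unmatched agents. -/
structure IsStableUpTo (N : Finset A) (val : A → A → ℤ) (M : Finset (Finset A)) (U : Set A)
    (h : A) : Prop where
  isPMatching : IsPMatching N val M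
  unmatched_eq : unmatched M = insert h U
  notMem : h ∉ U
  saturates : Saturates N val M U

/-- The agents of utility at least `2` that have a friend in `U`: the quantity that grows when a
matching stable up to one agent is rotated. -/
noncomputable def saturatedNeighbors (N : Finset A) (val : A → A → ℤ) (M : Finset (Finset A))
    (U : Set A) : Finset A :=
  open Classical in
  N.filter fun v => 2 ≤ utility val M v ∧ ∃ z ∈ U, (friendGraph N val).Adj v z

lemma mem_saturatedNeighbors {v : A} : v ∈ saturatedNeighbors N val M U ↔
    v ∈ N ∧ 2 ≤ utility val M v ∧ ∃ z ∈ U, (friendGraph N val).Adj v z := by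
  simp [saturatedNeighbors]

lemma saturatedNeighbors_subset : saturatedNeighbors N val M U ⊆ N :=
  fun _ hv => (mem_saturatedNeighbors.1 hv).1

namespace IsStableUpTo

lemma subset_unmatched (H : IsStableUpTo N val M U h) : U ⊆ unmatched M :=
  H.unmatched_eq ▸ Set.subset_insert h U

lemma mem_unmatched (H : IsStableUpTo N val M U h) : h ∈ unmatched M :=
  H.unmatched_eq ▸ Set.mem_insert h U

lemma exists_saturates_of_unmatched_centre (hbs : BinSym N val) (H : IsStableUpTo N val M U h)
    (hc : IsCherry N val h y z) (hy : y ∈ unmatched M) (hz : z ∈ U) :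
    ∃ M', IsPMatching N val M' ∧ Saturates N val M' (unmatched M') := by
  have hM' := H.isPMatching.insert_cherry hbs.nonneg hc H.mem_unmatched hy (H.subset_unmatched hz)
  refine ⟨_, hM', H.saturates.mono ?_ fun c _ _ _ hle => hle.trans ?_⟩
  · rw [unmatched_insert, H.unmatched_eq]
    rintro a ⟨rfl | ha, hat⟩
    · simp at hat
    · exact ha
  · exact hM'.1.utility_le hbs.nonneg fun t ht _ => mem_insert_of_mem ht

/-- Exchanging `{y, c, w}` for the two cherries `h - y - z` and `w - c - d`. -/
lemma exists_saturates_of_adj (hbs : BinSym N val) (htf : TriangleFree N val)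
    (H : IsStableUpTo N val M U h) (hc : IsCherry N val h y z) (hz : z ∈ U)
    (hyw : IsCherry N val y c w) (ht : {y, c, w} ∈ M) (uy : utility val M y < 2)
    (uw : utility val M w < 2) (hd : d ∈ U) (hcd : (friendGraph N val).Adj c d) :
    ∃ M', IsPMatching N val M' ∧ Saturates N val M' (unmatched M') := by
  have hM := H.isPMatching
  have hdU := H.subset_unmatched hd
  obtain ⟨-, hhc, hhw⟩ := ne_of_mem_unmatched ht H.mem_unmatched
  obtain ⟨-, hzc, hzw⟩ := ne_of_mem_unmatched ht (H.subset_unmatched hz)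
  obtain ⟨hdy, -, hdw⟩ := ne_of_mem_unmatched ht hdU
  have hhd : h ≠ d := fun e => H.notMem (e ▸ hd)
  have hzd : z ≠ d := fun e => htf.not_adj hyw.left hcd (e ▸ hc.right)
  have hwd : IsCherry N val w c d := ⟨hyw.right, hcd, hdw.symm⟩
  have unmatched_erase := hM.1.unmatched_erase ht
  have hM₁ := hM.exchange_cherry hbs.nonneg ht hwd (by simp) (by simp) (.inl hdU)
  have hM₂ := hM₁.insert_cherry hbs.nonneg hc
    (by simp [unmatched_insert, unmatched_erase, H.mem_unmatched, hhw, hhc, hhd])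
    (by simp [unmatched_insert, unmatched_erase, hyw.ne, hyw.left.ne.symm, hdy.symm])
    (by simp [unmatched_insert, unmatched_erase, H.subset_unmatched hz, hzw, hzc, hzd])
  refine ⟨_, hM₂, H.saturates.mono ?_ fun v _ _ _ hv => ?_⟩
  · rw [unmatched_insert, unmatched_insert, unmatched_erase, H.unmatched_eq]
    intro a
    simp only [Set.mem_sdiff, Set.mem_union, Set.mem_insert_iff, Set.mem_singleton_iff,
      coe_insert, coe_singleton]
    grind
  · by_cases hvt : v ∈ ({y, c, w} : Finset A)
    · have hvc : v = c := by grind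
      rw [hvc, hwd.utility_centre hM₂.1 (by simp)]
    · refine hv.trans (hM₂.1.utility_le hbs.nonneg fun t ht hvt' => ?_)
      grind

/-- The triple `{y, c, w}` becomes `{c, y, h}`, which turns `w` into the exceptional agent. -/
lemma exists_rotate (hbs : BinSym N val) (H : IsStableUpTo N val M U h)
    (hc : IsCherry N val h y z) (hz : z ∈ U) (hyw : IsCherry N val y c w) (ht : {y, c, w} ∈ M)
    (uy : utility val M y < 2) (uw : utility val M w < 2)
    (hcU : ∀ d ∈ U, ¬ (friendGraph N val).Adj c d) :
    ∃ M', IsStableUpTo N val M' U w ∧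
      saturatedNeighbors N val M U ⊂ saturatedNeighbors N val M' U := by
  have hM := H.isPMatching
  have hU : ∀ a ∈ U, a ≠ y ∧ a ≠ c ∧ a ≠ w := fun a ha =>
    ne_of_mem_unmatched ht (H.subset_unmatched ha)
  obtain ⟨-, hhc, hhw⟩ := ne_of_mem_unmatched ht H.mem_unmatched
  have hcyh : IsCherry N val c y h := ⟨hyw.left.symm, hc.left, hhc.symm⟩
  have hM' := hM.exchange_cherry hbs.nonneg ht hcyh (by simp) (by simp) (.inl H.mem_unmatched)
  have uy' := hcyh.utility_centre hM'.1 (mem_insert_self _ _)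
  have hle : ∀ v, ∀ d ∈ U, (friendGraph N val).Adj v d → 2 ≤ utility val M v →
      2 ≤ utility val (insert {c, y, h} (M.erase {y, c, w})) v := by
    intro v d hd hvd hv
    have hvc : v ≠ c := fun e => hcU d hd (e ▸ hvd)
    have hvt : v ∉ ({y, c, w} : Finset A) := by grind
    refine hv.trans (hM'.1.utility_le hbs.nonneg fun t ht hvt' => ?_)
    grind
  refine ⟨_, ⟨hM', ?_, fun hw => (hU w hw).2.2 rfl, H.saturates.mono subset_rfl hle⟩, ?_⟩
  · rw [unmatched_insert, hM.1.unmatched_erase ht, H.unmatched_eq]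
    ext a
    simp only [Set.mem_sdiff, Set.mem_union, Set.mem_insert_iff, Set.mem_singleton_iff,
      coe_insert, coe_singleton]
    grind [H.notMem, hyw.ne, hyw.right.ne]
  · refine (ssubset_iff_of_subset fun v hv => ?_).2 ⟨y, ?_, ?_⟩
    · obtain ⟨hvN, hv, d, hd, hvd⟩ := mem_saturatedNeighbors.1 hv
      exact mem_saturatedNeighbors.2 ⟨hvN, hle v d hd hvd hv, d, hd, hvd⟩
    · exact mem_saturatedNeighbors.2 ⟨hc.left.2.1, uy'.ge, z, hz, hc.right⟩
    · exact fun hy => uy.not_ge (mem_saturatedNeighbors.1 hy).2.1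

lemma exists_isStable (hbs : BinSym N val) (htf : TriangleFree N val)
    (H : IsStableUpTo N val M U h) : ∃ M', IsPMatching N val M' ∧ IsStable N val M' := by
  have of_saturates : (∃ M', IsPMatching N val M' ∧ Saturates N val M' (unmatched M')) →
      ∃ M', IsPMatching N val M' ∧ IsStable N val M' :=
    fun ⟨M', hM', hsat⟩ => ⟨M', hM', hM'.isStable_of_saturates hbs htf hsat⟩
  induction hn : N.card - (saturatedNeighbors N val M U).card using Nat.strong_induction_on
    generalizing M h with | _ n ih =>
  by_cases hsat : Saturates N val M (unmatched M)
  · exact of_saturates ⟨M, H.isPMatching, hsat⟩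
  obtain ⟨y, z, hz, hc, uy⟩ := H.saturates.exists_cherry_of_not_insert (H.unmatched_eq ▸ hsat)
  by_cases hy : y ∈ unmatched M
  · exact of_saturates (H.exists_saturates_of_unmatched_centre hbs hc hy hz)
  obtain ⟨c, w, hyw, ht, uw⟩ := H.isPMatching.exists_cherry hbs hy uy
  by_cases hcU : ∃ d ∈ U, (friendGraph N val).Adj c d
  · obtain ⟨d, hd, hcd⟩ := hcU
    exact of_saturates (H.exists_saturates_of_adj hbs htf hc hz hyw ht uy uw hd hcd)
  push Not at hcU
  obtain ⟨M', H', hlt⟩ := H.exists_rotate hbs hc hz hyw ht uy uw hcU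
  refine ih _ ?_ H' rfl
  have hcard := card_lt_card hlt
  have hcard_le : (saturatedNeighbors N val M' U).card ≤ N.card :=
    card_le_card saturatedNeighbors_subset
  lia

end IsStableUpTo

end Repair

section Existence

variable [DecidableEq A] {N : Finset A} {val : A → A → ℤ} {M : Finset (Finset A)} {h x y z : A}

lemma IsPMatching.exists_isStable_insert (hbs : BinSym (insert h N) val)
    (htf : TriangleFree (insert h N) val) (hh : h ∉ N) (hM : IsPMatching N val M)
    (hst : IsStable N val M) :
    ∃ M', IsPMatching (insert h N) val M' ∧ IsStable (insert h N) val M' := by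
  have hhM : h ∈ unmatched M := hM.1.mem_unmatched hh
  have hsat := hst.saturates (hbs.mono (subset_insert h N))
  have hcentre : ∀ x c z, IsCherry (insert h N) val x c z → x ∈ unmatched M \ {h} →
      z ∈ unmatched M \ {h} → utility val M c < 2 → c = h := by
    intro x c z hc hx hz hlt
    by_contra hch
    exact hlt.not_ge <| hsat (hc.restrict (mem_of_mem_insert_of_ne hc.left.2.2.1 hx.2)
      (mem_of_mem_insert_of_ne hc.left.2.1 hch)
      (mem_of_mem_insert_of_ne hc.right.2.2.1 hz.2)) hx.1 hz.1
  have hMN := hM.mono (subset_insert h N)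
  by_cases hsatN : Saturates (insert h N) val M (unmatched M \ {h})
  · have H : IsStableUpTo (insert h N) val M (unmatched M \ {h}) h :=
      ⟨hMN, by rw [Set.insert_sdiff_singleton, Set.insert_eq_of_mem hhM], by simp, hsatN⟩
    exact H.exists_isStable hbs htf
  simp only [Saturates, not_forall, not_le] at hsatN
  obtain ⟨x, c, z, hc, hx, hz, hlt⟩ := hsatN
  obtain rfl := hcentre x c z hc hx hz hlt
  have hM' := hMN.insert_cherry hbs.nonneg hc hx.1 hhM hz.1
  refine ⟨_, hM', hM'.isStable_of_saturates hbs htf fun x' c' z' hc' hx' hz' => ?_⟩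
  rw [unmatched_insert] at hx' hz'
  by_contra! hlt'
  have hle : utility val M c' ≤ utility val (insert {x, c, z} M) c' :=
    hM'.1.utility_le hbs.nonneg fun t ht _ => mem_insert_of_mem ht
  have hcc' := hcentre x' c' z' hc' ⟨hx'.1, by grind⟩ ⟨hz'.1, by grind⟩ (hle.trans_lt hlt')
  rw [hcc', hc.utility_centre hM'.1 (mem_insert_self _ _)] at hlt'
  exact hlt'.false

lemma TriangleFree.exists_isStable (hbs : BinSym N val) (htf : TriangleFree N val) :
    ∃ M, IsPMatching N val M ∧ IsStable N val M := by
  induction N using Finset.induction_on with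
  | empty => exact ⟨∅, by simp [IsPMatching, IsMatching], fun x y z hb => notMem_empty x hb.1⟩
  | insert h N hh ih =>
    have hsub := subset_insert h N
    obtain ⟨M, hM, hst⟩ := ih (hbs.mono hsub) (htf.mono hsub)
    exact hM.exists_isStable_insert hbs htf hh hst

lemma IsTriangle.rotate (hbs : BinSym N val) (ht : IsTriangle N val x y z) :
    IsTriangle N val y z x := by
  obtain ⟨hx, hy, hz, hxy, hxz, hyz, vxy, vyz, vxz⟩ := ht
  exact ⟨hy, hz, hx, hyz, hxy.symm, hxz.symm, vyz, hbs.2 x hx z hz ▸ vxz, hbs.2 x hx y hy ▸ vxy⟩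

lemma IsTriangle.isCherry (hbs : BinSym N val) (ht : IsTriangle N val x y z) :
    IsCherry N val x y z := by
  obtain ⟨hx, hy, hz, hxy, hxz, hyz, vxy, vyz, -⟩ := ht
  exact ⟨(hbs.adj hx hy hxy vxy).symm, hbs.adj hy hz hyz vyz, hxz⟩

lemma IsTriangle.utility_eq_two (hbs : BinSym N val) (ht : IsTriangle N val x y z)
    (hM : IsMatching N M) (hmem : {x, y, z} ∈ M) {a : A} (ha : a ∈ ({x, y, z} : Finset A)) :
    utility val M a = 2 := by
  have hrot : ({y, z, x} : Finset A) = {x, y, z} := by rw [pair_comm, insert_comm]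
  have hrot' : ({z, x, y} : Finset A) = {x, y, z} := by rw [insert_comm, pair_comm]
  obtain rfl | rfl | rfl : a = x ∨ a = y ∨ a = z := by simpa using ha
  · exact ((ht.rotate hbs).rotate hbs).isCherry hbs |>.utility_centre hM (hrot' ▸ hmem)
  · exact (ht.isCherry hbs).utility_centre hM hmem
  · exact ((ht.rotate hbs).isCherry hbs).utility_centre hM (hrot ▸ hmem)

lemma IsTriangle.exists_isStable (hbs : BinSym N val) (ht : IsTriangle N val x y z)
    (hM : IsPMatching (N \ {x, y, z}) val M) (hst : IsStable (N \ {x, y, z}) val M) :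
    ∃ M', IsPMatching N val M' ∧ IsStable N val M' := by
  have hunmatched : ∀ a ∈ ({x, y, z} : Finset A), a ∈ unmatched M :=
    fun a ha => hM.1.mem_unmatched fun h => (mem_sdiff.1 h).2 ha
  have hM' := (hM.mono sdiff_subset).insert_cherry hbs.nonneg (ht.isCherry hbs)
    (hunmatched x (by simp)) (hunmatched y (by simp)) (hunmatched z (by simp))
  refine ⟨_, hM', hst.of_utility_le fun a ha b hb c hc hab hac hlt => ⟨mem_sdiff.2 ⟨ha, ?_⟩, ?_⟩⟩
  · intro hat
    rw [ht.utility_eq_two hbs hM'.1 (mem_insert_self _ _) hat] at hlt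
    linarith [hbs.le_one a ha b hb hab, hbs.le_one a ha c hc hac]
  · exact hM'.1.utility_le hbs.nonneg fun t ht _ => mem_insert_of_mem ht

lemma BinSym.exists_isPMatching_isStable (hbs : BinSym N val) :
    ∃ M, IsPMatching N val M ∧ IsStable N val M := by
  induction N using Finset.strongInduction with | H N ih =>
  by_cases htf : TriangleFree N val
  · exact htf.exists_isStable hbs
  simp only [TriangleFree, not_forall, not_not] at htf
  obtain ⟨x, y, z, ht⟩ := htf
  have hlt : N \ {x, y, z} ⊂ N :=
    sdiff_ssubset (ht.isCherry hbs).subset (insert_nonempty x {y, z})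
  obtain ⟨M, hM, hst⟩ := ih _ hlt (hbs.mono sdiff_subset)
  exact ht.exists_isStable hbs hM hst

end Existence

/-- Every binary symmetric instance contains a stable `P`-matching (hence a stable
matching); moreover, if `|N|` is a multiple of three, it contains a stable matching in
which every agent is matched. -/
theorem exists_stable_pmatching_binSym [DecidableEq A]
    (N : Finset A) (val : A → A → ℤ) (hbs : BinSym N val) :
    (∃ M, IsPMatching N val M ∧ IsStable N val M) ∧
    (3 ∣ N.card →
      ∃ M, IsMatching N M ∧ IsStable N val M ∧ ∀ a ∈ N, ∃ t ∈ M, a ∈ t) := by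
  obtain ⟨M, hM, hst⟩ := hbs.exists_isPMatching_isStable
  exact ⟨⟨M, hM, hst⟩, fun h3 => hst.exists_perfect hM.1 hbs.nonneg h3⟩
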